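/- arXiv:1904.07022 — 6 statements merged into one kernel-verified Lean document; each statement's English description precedes it below -/
import Mathlib

section
/- Let L ∈ ℝ^{n×n} be the Laplacian matrix of a weighted digraph on n ≥ 1 vertices that has a directed spanning tree. Then rank(L) = n − 1. -/
/-!
The `i`-th entry of `L x` is `∑ j, A i j * (x i - x j)`. If `L x = 0` and `x` is maximal at `i`,
this is a vanishing sum of nonnegative terms, so `x` is also maximal at every in-neighbour of `i`.
Following a path back from a maximizer, the maximum is attained at the root; applied to `-x`, the
same holds for the minimum. Hence the kernel of `L` is the line of constant vectors.
-/

open Matrix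

section Laplacian

variable {V R : Type*} [Fintype V] [DecidableEq V]

/-- The in-degree Laplacian of the weighted digraph in which `A i j` is the weight of the edge from
`j` to `i`. Self-loops are allowed: their weights cancel on the diagonal. -/
def digraphLaplacian [AddCommGroup R] (A : Matrix V V R) : Matrix V V R :=
  diagonal (fun i => ∑ j, A i j) - A

theorem digraphLaplacian_mulVec_apply [NonUnitalNonAssocRing R] (A : Matrix V V R) (x : V → R)
    (i : V) : (digraphLaplacian A *ᵥ x) i = ∑ j, A i j * (x i - x j) := by
  rw [digraphLaplacian, sub_mulVec, Pi.sub_apply, mulVec_diagonal, Finset.sum_mul]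
  simp only [mulVec, dotProduct, mul_sub, Finset.sum_sub_distrib]

theorem digraphLaplacian_mulVec_one [NonAssocRing R] (A : Matrix V V R) :
    digraphLaplacian A *ᵥ 1 = 0 := by
  ext i
  simp [digraphLaplacian_mulVec_apply]

end Laplacian

/-- The vertex `r` is the root of a directed spanning tree: every vertex can be reached from `r`
along edges of positive weight. As in `digraphLaplacian`, the weight of the edge from `u` to `v` is
`A v u`. -/
def IsSpanningTreeRoot {V R : Type*} [Zero R] [LT R] (A : Matrix V V R) (r : V) : Prop :=
  ∀ i, Relation.ReflTransGen (fun u v => 0 < A v u) r i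

section MaximumPrinciple

variable {V R : Type*} [Fintype V] [DecidableEq V] [Ring R] [LinearOrder R] [IsStrictOrderedRing R]
  {A : Matrix V V R} {x : V → R}

theorem le_of_edge_of_digraphLaplacian_mulVec_nonpos {i j : V} (hA : ∀ k, 0 ≤ A i k)
    (hx : (digraphLaplacian A *ᵥ x) i ≤ 0) (hmax : ∀ k, x k ≤ x i) (hedge : 0 < A i j) :
    x i ≤ x j := by
  have hterm : A i j * (x i - x j) ≤ ∑ k, A i k * (x i - x k) :=
    Finset.single_le_sum (f := fun k => A i k * (x i - x k))
      (fun k _ => mul_nonneg (hA k) (sub_nonneg.2 (hmax k))) (Finset.mem_univ j)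
  rw [digraphLaplacian_mulVec_apply] at hx
  exact sub_nonpos.1 (nonpos_of_mul_nonpos_right (hterm.trans hx) hedge)

theorem le_of_path_of_digraphLaplacian_mulVec_nonpos {u v : V} (hA : ∀ i j, 0 ≤ A i j)
    (hx : digraphLaplacian A *ᵥ x ≤ 0) (hmax : ∀ k, x k ≤ x v)
    (hpath : Relation.ReflTransGen (fun i j => 0 < A j i) u v) (k : V) : x k ≤ x u := by
  induction hpath using Relation.ReflTransGen.head_induction_on generalizing k with
  | refl => exact hmax k
  | head hedge _ ih =>
    exact (ih k).trans (le_of_edge_of_digraphLaplacian_mulVec_nonpos (hA _) (hx _) ih hedge)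

theorem IsSpanningTreeRoot.le_of_digraphLaplacian_mulVec_nonpos {r : V}
    (hr : IsSpanningTreeRoot A r) (hA : ∀ i j, 0 ≤ A i j) (hx : digraphLaplacian A *ᵥ x ≤ 0)
    (i : V) : x i ≤ x r := by
  have : Nonempty V := ⟨r⟩
  obtain ⟨m, hm⟩ := Finite.exists_max x
  exact le_of_path_of_digraphLaplacian_mulVec_nonpos hA hx hm (hr m) i

theorem IsSpanningTreeRoot.eq_of_digraphLaplacian_mulVec_eq_zero {r : V}
    (hr : IsSpanningTreeRoot A r) (hA : ∀ i j, 0 ≤ A i j) (hx : digraphLaplacian A *ᵥ x = 0)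
    (i : V) : x i = x r := by
  have hneg : digraphLaplacian A *ᵥ (-x) = 0 := by rw [mulVec_neg, hx, neg_zero]
  have hmax : x i ≤ x r := hr.le_of_digraphLaplacian_mulVec_nonpos hA hx.le i
  have hmin : -x i ≤ -x r := hr.le_of_digraphLaplacian_mulVec_nonpos hA hneg.le i
  exact hmax.antisymm (neg_le_neg_iff.1 hmin)

end MaximumPrinciple

section Rank

theorem rank_add_finrank_ker_mulVecLin {m n R : Type*} [Fintype n] [CommRing R]
    [IsDomain R] (M : Matrix m n R) :
    M.rank + Module.finrank R (LinearMap.ker M.mulVecLin) = Fintype.card n := by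
  rw [Matrix.rank, ← M.mulVecLin.quotKerEquivRange.finrank_eq,
    Submodule.finrank_quotient_add_finrank, Module.finrank_fintype_fun_eq_card]

variable {V R : Type*} [Fintype V] [DecidableEq V]
  [CommRing R] [LinearOrder R] [IsStrictOrderedRing R] {A : Matrix V V R} {r : V}

theorem IsSpanningTreeRoot.ker_mulVecLin_digraphLaplacian (hr : IsSpanningTreeRoot A r)
    (hA : ∀ i j, 0 ≤ A i j) :
    LinearMap.ker (digraphLaplacian A).mulVecLin = Submodule.span R {1} := by
  apply le_antisymm
  · intro x hx
    refine Submodule.mem_span_singleton.2 ⟨x r, funext fun i => ?_⟩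
    simpa using (hr.eq_of_digraphLaplacian_mulVec_eq_zero hA hx i).symm
  · rw [Submodule.span_singleton_le_iff_mem]
    exact digraphLaplacian_mulVec_one A

theorem IsSpanningTreeRoot.finrank_ker_mulVecLin_digraphLaplacian (hr : IsSpanningTreeRoot A r)
    (hA : ∀ i j, 0 ≤ A i j) :
    Module.finrank R (LinearMap.ker (digraphLaplacian A).mulVecLin) = 1 := by
  have : Nonempty V := ⟨r⟩
  rw [hr.ker_mulVecLin_digraphLaplacian hA,
    ← (LinearEquiv.toSpanNonzeroSingleton R (V → R) 1 one_ne_zero).finrank_eq,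
    Module.finrank_self]

end Rank

theorem laplacian_rank_of_spanning_tree_general {V R : Type*} [Fintype V] [DecidableEq V]
    [CommRing R] [LinearOrder R] [IsStrictOrderedRing R] {A : Matrix V V R}
    (hA : ∀ i j, 0 ≤ A i j) {r : V} (hr : IsSpanningTreeRoot A r) :
    (digraphLaplacian A).rank = Fintype.card V - 1 := by
  rw [← rank_add_finrank_ker_mulVecLin (digraphLaplacian A),
    hr.finrank_ker_mulVecLin_digraphLaplacian hA, Nat.add_sub_cancel]

/-- The Laplacian matrix of a weighted digraph on `n ≥ 1` vertices
that has a directed spanning tree has rank `n - 1`. -/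
theorem laplacian_rank_of_spanning_tree {n : ℕ} (hn : 1 ≤ n)
    (A : Matrix (Fin n) (Fin n) ℝ)
    (hA_nonneg : ∀ i j, 0 ≤ A i j)
    (hA_diag : ∀ i, A i i = 0)
    (L : Matrix (Fin n) (Fin n) ℝ)
    (hL : ∀ i j, L i j = (if i = j then ∑ k, A i k else 0) - A i j)
    (r : Fin n)
    (htree : ∀ i, Relation.ReflTransGen (fun u v => 0 < A v u) r i) :
    L.rank = n - 1 := by
  obtain rfl : L = digraphLaplacian A := Matrix.ext hL
  simpa only [Fintype.card_fin] using laplacian_rank_of_spanning_tree_general hA_nonneg htree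
end

section
/- Let L ∈ ℝ^{n×n} be the Laplacian matrix of a weighted digraph on n vertices that has a directed spanning tree. Then there exists a nonnegative vector ξ ∈ ℝⁿ with Σ_{i=1}^n ξ_i = 1 such that ξᵀL = 0. -/
/-!
A left null vector `v` of `L` exists because the row sums of `L` vanish. Since the off-diagonal
entries are nonpositive, the triangle inequality applied to each column gives `|v| ᵥ* L ≤ 0`.
The entries of `|v| ᵥ* L` add up to `|v| ⬝ᵥ (L *ᵥ 1) = 0`, so all of them vanish, and `|v|` only
has to be normalized.
-/

open Finset Matrix

section MMatrix

variable {ι R : Type*} [Fintype ι]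

theorem abs_vecMul_nonpos_of_vecMul_eq_zero [Ring R] [LinearOrder R] [IsOrderedRing R]
    {L : Matrix ι ι R} (hL : ∀ i j, i ≠ j → L i j ≤ 0) {v : ι → R} (hv : v ᵥ* L = 0) :
    |v| ᵥ* L ≤ 0 := by
  classical
  intro j
  have hcol : v j * L j j + ∑ i ∈ univ.erase j, v i * L i j = 0 :=
    (add_sum_erase univ (fun i ↦ v i * L i j) (mem_univ j)).trans (congrFun hv j)
  have hdiag : |v j| * L j j ≤ ∑ i ∈ univ.erase j, |v i| * -L i j :=
    calc |v j| * L j j ≤ |v j| * |L j j| :=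
          mul_le_mul_of_nonneg_left (le_abs_self _) (abs_nonneg _)
      _ = |∑ i ∈ univ.erase j, v i * L i j| := by
          rw [← abs_mul, eq_neg_of_add_eq_zero_left hcol, abs_neg]
      _ ≤ ∑ i ∈ univ.erase j, |v i * L i j| := abs_sum_le_sum_abs _ _
      _ = ∑ i ∈ univ.erase j, |v i| * -L i j :=
          sum_congr rfl fun i hi ↦ by
            rw [abs_mul, abs_of_nonpos (hL i j (ne_of_mem_erase hi))]
  calc ∑ i, |v i| * L i j = |v j| * L j j + ∑ i ∈ univ.erase j, |v i| * L i j :=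
        (add_sum_erase univ (fun i ↦ |v i| * L i j) (mem_univ j)).symm
    _ ≤ 0 := by simpa [sum_neg_distrib, le_neg_iff_add_nonpos_right] using hdiag

theorem vecMul_eq_zero_of_nonpos_of_mulVec_nonneg [Semiring R] [PartialOrder R]
    [IsStrictOrderedRing R] {κ : Type*} [Fintype κ] {M : Matrix ι κ R} {u : ι → R} {w : κ → R}
    (hu : 0 ≤ u) (huM : u ᵥ* M ≤ 0) (hw : ∀ j, 0 < w j) (hMw : 0 ≤ M *ᵥ w) :
    u ᵥ* M = 0 := by
  have hterm : ∀ j ∈ univ, (u ᵥ* M) j * w j ≤ 0 := fun j _ ↦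
    mul_nonpos_of_nonpos_of_nonneg (huM j) (hw j).le
  have hpairing : ∑ j, (u ᵥ* M) j * w j = 0 :=
    (sum_nonpos hterm).antisymm <|
      (dotProduct_nonneg_of_nonneg hu hMw).trans_eq (dotProduct_mulVec u M w)
  funext j
  refine (huM j).eq_of_not_lt fun hneg ↦ ?_
  exact (mul_neg_of_neg_of_pos hneg (hw j)).ne
    ((sum_eq_zero_iff_of_nonpos hterm).mp hpairing j (mem_univ j))

theorem inv_sum_smul_mem_stdSimplex [Semifield R] [LinearOrder R] [IsStrictOrderedRing R]
    {u : ι → R} (hu : 0 ≤ u) (hu_ne : u ≠ 0) : (∑ i, u i)⁻¹ • u ∈ stdSimplex R ι := by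
  have hsum : 0 < ∑ i, u i := Fintype.sum_pos (hu.lt_of_ne' hu_ne)
  refine ⟨fun i ↦ mul_nonneg (inv_nonneg.mpr hsum.le) (hu i), ?_⟩
  simp only [Pi.smul_apply, smul_eq_mul]
  rw [← mul_sum, inv_mul_cancel₀ hsum.ne']

theorem exists_mem_stdSimplex_vecMul_eq_zero_of_det_eq_zero [DecidableEq ι] [Field R]
    [LinearOrder R] [IsStrictOrderedRing R] {L : Matrix ι ι R}
    (hL : ∀ i j, i ≠ j → L i j ≤ 0) {w : ι → R}
    (hw : ∀ j, 0 < w j) (hLw : 0 ≤ L *ᵥ w) (hdet : L.det = 0) :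
    ∃ ξ ∈ stdSimplex R ι, ξ ᵥ* L = 0 := by
  obtain ⟨v, hv_ne, hv⟩ := exists_vecMul_eq_zero_iff.mpr hdet
  have habs : |v| ᵥ* L = 0 := vecMul_eq_zero_of_nonpos_of_mulVec_nonneg (abs_nonneg v)
    (abs_vecMul_nonpos_of_vecMul_eq_zero hL hv) hw hLw
  have habs_ne : |v| ≠ 0 := fun h ↦ hv_ne <| funext fun i ↦ abs_eq_zero.mp (congrFun h i)
  refine ⟨_, inv_sum_smul_mem_stdSimplex (abs_nonneg v) habs_ne, ?_⟩
  rw [smul_vecMul, habs, smul_zero]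

end MMatrix

theorem laplacian_left_null_vector_of_spanning_tree_general {ι R : Type*} [Fintype ι] [Nonempty ι]
    [Field R] [LinearOrder R] [IsStrictOrderedRing R] {L : Matrix ι ι R}
    (hL : ∀ i j, i ≠ j → L i j ≤ 0) (hrow : ∀ i, ∑ j, L i j = 0) :
    ∃ ξ ∈ stdSimplex R ι, ξ ᵥ* L = 0 := by
  classical
  have hone : L *ᵥ 1 = 0 := funext fun i ↦ (dotProduct_one (L i)).trans (hrow i)
  exact exists_mem_stdSimplex_vecMul_eq_zero_of_det_eq_zero hL (fun _ ↦ one_pos) hone.ge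
    (exists_mulVec_eq_zero_iff.mp ⟨1, one_ne_zero, hone⟩)

/-- The Laplacian matrix of a weighted digraph that has a directed
spanning tree admits a nonnegative left null vector with unit component sum. -/
theorem laplacian_left_null_vector_of_spanning_tree {n : ℕ}
    (A : Matrix (Fin n) (Fin n) ℝ)
    (hA_nonneg : ∀ i j, 0 ≤ A i j)
    (hA_diag : ∀ i, A i i = 0)
    (L : Matrix (Fin n) (Fin n) ℝ)
    (hL : ∀ i j, L i j = (if i = j then ∑ k, A i k else 0) - A i j)
    (r : Fin n)
    (htree : ∀ i, Relation.ReflTransGen (fun u v => 0 < A v u) r i) :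
    ∃ ξ : Fin n → ℝ, (∀ i, 0 ≤ ξ i) ∧ (∑ i, ξ i = 1) ∧
      (∀ j, ∑ i, ξ i * L i j = 0) := by
  have : Nonempty (Fin n) := ⟨r⟩
  obtain ⟨ξ, ⟨hξ_nonneg, hξ_sum⟩, hξL⟩ := laplacian_left_null_vector_of_spanning_tree_general
    (L := L) (fun i j hij ↦ by simp [hL, hij, hA_nonneg]) (fun i ↦ by simp [hL])
  exact ⟨ξ, hξ_nonneg, hξ_sum, congrFun hξL⟩
end

section
/- Let L ∈ ℝ^{n×n} be the Laplacian matrix of a strongly connected weighted digraph on n vertices, let ξ ∈ ℝⁿ be a strictly positive vector with ξᵀL = 0, and set Ξ = diag(ξ). Then the matrix M = ΞL + LᵀΞ is symmetric, all its row sums are zero, M is positive semidefinite, and its kernel is exactly the span of the all-ones vector 𝟙ₙ (i.e., Mx = 0 iff all components of x are equal); in particular, zero is an eigenvalue of M of multiplicity one. -/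
open Matrix

/-!
Write `(L x)ᵢ = ∑ⱼ aᵢⱼ (xᵢ - xⱼ)`. The identity `2 xᵢ (xᵢ - xⱼ) = (xᵢ - xⱼ)² + (xᵢ² - xⱼ²)`,
weighted by `ξᵢ aᵢⱼ` and summed, gives `xᵀMx = ∑ᵢⱼ ξᵢ aᵢⱼ (xᵢ - xⱼ)² + ξᵀL(x²)`, where `x²` is the
entrywise square, and the last term vanishes because `ξᵀL = 0`. Hence `xᵀMx` is a sum of nonnegative
terms, and when it vanishes `x` is constant along every edge, hence constant by connectivity.
-/

section Lyapunov

variable {ι R : Type*} [Fintype ι] [CommSemiring R] {P L : Matrix ι ι R}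

/-- The Lyapunov operator `P ↦ PL + LᵀP`; for `P = Ξ` it is the symmetrization `M = ΞL + LᵀΞ`. -/
def lyapunov (P L : Matrix ι ι R) : Matrix ι ι R :=
  P * L + Lᵀ * P

theorem lyapunov_isSymm (hP : P.IsSymm) : (lyapunov P L).IsSymm := by
  simp only [IsSymm, lyapunov, transpose_add, transpose_mul, transpose_transpose, hP.eq, add_comm]

theorem lyapunov_mulVec_eq_zero {v : ι → R} (hv : L *ᵥ v = 0) (hPv : (P *ᵥ v) ᵥ* L = 0) :
    lyapunov P L *ᵥ v = 0 := by
  rw [lyapunov, add_mulVec, ← mulVec_mulVec, ← mulVec_mulVec, hv, mulVec_zero, mulVec_transpose,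
    hPv, add_zero]

theorem dotProduct_lyapunov_mulVec (hP : P.IsSymm) (x : ι → R) :
    x ⬝ᵥ lyapunov P L *ᵥ x = 2 * (P *ᵥ x ⬝ᵥ L *ᵥ x) := by
  have hleft : x ⬝ᵥ P *ᵥ L *ᵥ x = P *ᵥ x ⬝ᵥ L *ᵥ x := by
    rw [dotProduct_mulVec, ← mulVec_transpose, hP.eq]
  have hright : x ⬝ᵥ Lᵀ *ᵥ P *ᵥ x = P *ᵥ x ⬝ᵥ L *ᵥ x := by
    rw [dotProduct_mulVec, vecMul_transpose, dotProduct_comm]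
  rw [lyapunov, add_mulVec, ← mulVec_mulVec, ← mulVec_mulVec, dotProduct_add, hleft, hright,
    two_mul]

end Lyapunov

section DirichletForm

variable {ι R : Type*} [Fintype ι] [CommRing R]

/-- The energy of `x` on the digraph with edge weights `W`. Each ordered pair of vertices is counted
once, without the customary factor `1 / 2`. -/
def dirichletForm (W : Matrix ι ι R) (x : ι → R) : R :=
  ∑ i, ∑ j, W i j * (x i - x j) ^ 2

variable [LinearOrder R] [IsStrictOrderedRing R] {W : Matrix ι ι R}

theorem dirichletForm_nonneg (hW : ∀ i j, 0 ≤ W i j) (x : ι → R) : 0 ≤ dirichletForm W x :=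
  Finset.sum_nonneg fun i _ => Finset.sum_nonneg fun j _ => mul_nonneg (hW i j) (sq_nonneg _)

theorem dirichletForm_eq_zero_iff (hW : ∀ i j, 0 ≤ W i j) {x : ι → R} :
    dirichletForm W x = 0 ↔ ∀ i j, 0 < W i j → x i = x j := by
  have hterm (i j : ι) : 0 ≤ W i j * (x i - x j) ^ 2 := mul_nonneg (hW i j) (sq_nonneg _)
  have hterm_eq_zero (i j : ι) : W i j * (x i - x j) ^ 2 = 0 ↔ (0 < W i j → x i = x j) := by
    rw [mul_eq_zero, sq_eq_zero_iff, sub_eq_zero, (hW i j).lt_iff_ne', or_iff_not_imp_left]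
  simp only [dirichletForm, Finset.sum_eq_zero_iff_of_nonneg, hterm, Finset.sum_nonneg,
    Finset.mem_univ, forall_const, implies_true, hterm_eq_zero]

theorem dirichletForm_eq_zero_iff_forall_eq (hW : ∀ i j, 0 ≤ W i j)
    (hconn : ∀ i j, Relation.EqvGen (fun u v => 0 < W v u) i j) {x : ι → R} :
    dirichletForm W x = 0 ↔ ∀ i j, x i = x j := by
  rw [dirichletForm_eq_zero_iff hW]
  refine ⟨fun hedge i j => ?_, fun hx i j _ => hx i j⟩
  induction hconn i j with
  | rel u v huv => exact (hedge v u huv).symm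
  | refl => rfl
  | symm _ _ _ ih => exact ih.symm
  | trans _ _ _ _ _ ih₁ ih₂ => exact ih₁.trans ih₂

end DirichletForm

section WeightedLaplacian

variable {ι R : Type*} [Fintype ι] [DecidableEq ι] [CommRing R]

/-- The Laplacian of the digraph in which `A i j` is the weight of the edge from `j` to `i`.
Loops are allowed: the diagonal entries of `A` cancel. -/
def weightedLaplacian (A : Matrix ι ι R) : Matrix ι ι R :=
  diagonal (fun i => ∑ k, A i k) - A

theorem weightedLaplacian_mulVec_apply (A : Matrix ι ι R) (x : ι → R) (i : ι) :
    (weightedLaplacian A *ᵥ x) i = ∑ j, A i j * (x i - x j) := by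
  rw [weightedLaplacian, sub_mulVec, Pi.sub_apply, mulVec_diagonal]
  simp only [mul_sub, Finset.sum_sub_distrib, Finset.sum_mul, mulVec, dotProduct]

theorem weightedLaplacian_mulVec_one (A : Matrix ι ι R) : weightedLaplacian A *ᵥ 1 = 0 := by
  ext i
  simp [weightedLaplacian_mulVec_apply]

theorem two_mul_mul_weightedLaplacian_mulVec_apply (A : Matrix ι ι R) (x : ι → R) (i : ι) :
    2 * (x i * (weightedLaplacian A *ᵥ x) i) =
      ∑ j, A i j * (x i - x j) ^ 2 + (weightedLaplacian A *ᵥ x ^ 2) i := by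
  simp only [weightedLaplacian_mulVec_apply, Finset.mul_sum, ← Finset.sum_add_distrib, Pi.pow_apply]
  exact Finset.sum_congr rfl fun j _ => by ring

variable {A : Matrix ι ι R} {ξ : ι → R}

theorem dotProduct_lyapunov_weightedLaplacian_mulVec (hξ : ξ ᵥ* weightedLaplacian A = 0)
    (x : ι → R) :
    x ⬝ᵥ lyapunov (diagonal ξ) (weightedLaplacian A) *ᵥ x = dirichletForm (diagonal ξ * A) x :=
  calc
    _ = 2 * (diagonal ξ *ᵥ x ⬝ᵥ weightedLaplacian A *ᵥ x) :=
      dotProduct_lyapunov_mulVec (isSymm_diagonal ξ) x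
    _ = ∑ i, ξ i * (2 * (x i * (weightedLaplacian A *ᵥ x) i)) := by
      simp only [dotProduct, mulVec_diagonal, Finset.mul_sum]
      exact Finset.sum_congr rfl fun i _ => by ring
    _ = dirichletForm (diagonal ξ * A) x + ξ ⬝ᵥ weightedLaplacian A *ᵥ x ^ 2 := by
      simp only [two_mul_mul_weightedLaplacian_mulVec_apply, mul_add, Finset.sum_add_distrib,
        dirichletForm, diagonal_mul, Finset.mul_sum, mul_assoc, dotProduct]
    _ = dirichletForm (diagonal ξ * A) x := by
      rw [dotProduct_mulVec, hξ, zero_dotProduct, add_zero]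

theorem lyapunov_weightedLaplacian_mulVec_one (hξ : ξ ᵥ* weightedLaplacian A = 0) :
    lyapunov (diagonal ξ) (weightedLaplacian A) *ᵥ 1 = 0 := by
  refine lyapunov_mulVec_eq_zero (weightedLaplacian_mulVec_one A) ?_
  rwa [show diagonal ξ *ᵥ 1 = ξ by ext; simp [mulVec_diagonal]]

variable [LinearOrder R] [IsStrictOrderedRing R]

theorem diagonal_mul_apply_nonneg (hξ : ∀ i, 0 ≤ ξ i) (hA : ∀ i j, 0 ≤ A i j) (i j : ι) :
    0 ≤ (diagonal ξ * A) i j := by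
  rw [diagonal_mul]
  exact mul_nonneg (hξ i) (hA i j)

theorem lyapunov_weightedLaplacian_mulVec_eq_zero_iff (hA : ∀ i j, 0 ≤ A i j)
    (hconn : ∀ i j, Relation.EqvGen (fun u v => 0 < A v u) i j) (hξpos : ∀ i, 0 < ξ i)
    (hξ : ξ ᵥ* weightedLaplacian A = 0) {x : ι → R} :
    lyapunov (diagonal ξ) (weightedLaplacian A) *ᵥ x = 0 ↔ ∀ i j, x i = x j := by
  constructor
  · intro hx
    have henergy : dirichletForm (diagonal ξ * A) x = 0 := by
      rw [← dotProduct_lyapunov_weightedLaplacian_mulVec hξ, hx, dotProduct_zero]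
    refine (dirichletForm_eq_zero_iff_forall_eq
      (diagonal_mul_apply_nonneg (fun i => (hξpos i).le) hA) ?_).1 henergy
    simpa only [diagonal_mul, mul_pos_iff_of_pos_left (hξpos _)] using hconn
  · intro hx
    ext i
    have hconst : x = x i • 1 := by ext j; simp [hx j i]
    rw [hconst, mulVec_smul, lyapunov_weightedLaplacian_mulVec_one hξ, smul_zero]

theorem laplacian_symmetrization_properties_general (hA : ∀ i j, 0 ≤ A i j)
    (hconn : ∀ i j, Relation.EqvGen (fun u v => 0 < A v u) i j) (hξpos : ∀ i, 0 < ξ i)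
    (hξ : ξ ᵥ* weightedLaplacian A = 0) :
    (lyapunov (diagonal ξ) (weightedLaplacian A)).IsSymm ∧
    (∀ i, ∑ j, lyapunov (diagonal ξ) (weightedLaplacian A) i j = 0) ∧
    (∀ x : ι → R, 0 ≤ x ⬝ᵥ lyapunov (diagonal ξ) (weightedLaplacian A) *ᵥ x) ∧
    (∀ x : ι → R, lyapunov (diagonal ξ) (weightedLaplacian A) *ᵥ x = 0 ↔ ∀ i j, x i = x j) := by
  refine ⟨lyapunov_isSymm (isSymm_diagonal ξ), fun i => ?_, fun x => ?_,
    fun x => lyapunov_weightedLaplacian_mulVec_eq_zero_iff hA hconn hξpos hξ⟩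
  · simpa only [mulVec, dotProduct_one, Pi.zero_apply] using
      congrFun (lyapunov_weightedLaplacian_mulVec_one hξ) i
  · rw [dotProduct_lyapunov_weightedLaplacian_mulVec hξ]
    exact dirichletForm_nonneg (diagonal_mul_apply_nonneg (fun i => (hξpos i).le) hA) x

end WeightedLaplacian

/-- For a strongly connected weighted digraph with Laplacian `L`
and positive left null vector `ξ`, the matrix `M = ΞL + LᵀΞ` is symmetric,
has zero row sums, is positive semidefinite, and its kernel is the span of
the all-ones vector (so zero is an eigenvalue of multiplicity one). -/
theorem laplacian_symmetrization_properties {n : ℕ}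
    (A : Matrix (Fin n) (Fin n) ℝ)
    (hA_nonneg : ∀ i j, 0 ≤ A i j)
    (hA_diag : ∀ i, A i i = 0)
    (L : Matrix (Fin n) (Fin n) ℝ)
    (hL : ∀ i j, L i j = (if i = j then ∑ k, A i k else 0) - A i j)
    (hconn : ∀ i j : Fin n, Relation.ReflTransGen (fun u v => 0 < A v u) i j)
    (ξ : Fin n → ℝ) (hξpos : ∀ i, 0 < ξ i)
    (hξL : ∀ j, ∑ i, ξ i * L i j = 0)
    (M : Matrix (Fin n) (Fin n) ℝ)
    (hM : M = Matrix.diagonal ξ * L + Lᵀ * Matrix.diagonal ξ) :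
    Mᵀ = M ∧
    (∀ i, ∑ j, M i j = 0) ∧
    (∀ x : Fin n → ℝ, 0 ≤ x ⬝ᵥ M.mulVec x) ∧
    (∀ x : Fin n → ℝ, M.mulVec x = 0 ↔ ∀ i j, x i = x j) := by
  obtain rfl : L = weightedLaplacian A := Matrix.ext hL
  subst hM
  exact laplacian_symmetrization_properties_general hA_nonneg
    (fun i j => Relation.EqvGen.reflTransGen_le_eqvGen _ i j (hconn i j)) hξpos (funext hξL)
end

section
/- Let L ∈ ℝ^{n×n} have all row sums equal to zero and nonpositive off-diagonal entries (L_{ij} ≤ 0 for i ≠ j), and let ξ ∈ ℝⁿ be nonnegative with ξᵀL = 0. For vectors y_1, …, y_n, e_1, …, e_n ∈ ℝᵖ define q_i = −(1/2) Σ_{j=1}^n L_{ij} ‖y_j − y_i‖². Then each q_i ≥ 0 and − Σ_{i=1}^n ξ_i ⟨y_i, Σ_{j=1}^n L_{ij}(y_j + e_j)⟩ ≤ −(1/2) Σ_{i=1}^n ξ_i q_i + Σ_{i=1}^n ξ_i L_{ii} ‖e_i‖². -/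
open Matrix
open scoped RealInnerProductSpace

/-!
The matrix `M i j = ξ i * L i j` has zero row and column sums and nonpositive off-diagonal entries.
The zero sums turn `-∑ M i j * ⟪y i, y j⟫` into half the weighted sum of squared differences, which
is nonpositive. They also let `y i` be replaced by `y i - y j` in the cross term
`-∑ M i j * ⟪y i, e j⟫`, so that `⟪u, v⟫ ≤ ‖u‖ ^ 2 / 4 + ‖v‖ ^ 2` charges the errors to half of that
nonpositive quantity, at the price `-∑_{i ≠ j} M i j * ‖e j‖ ^ 2 = M j j * ‖e j‖ ^ 2` for each `j`.
-/

section Balanced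

variable {ι κ E : Type*} [Fintype ι] [Fintype κ] [SeminormedAddCommGroup E]

theorem sum_mul_norm_sub_sq_nonpos {a : ι → ℝ} {j : ι} (ha : ∀ i, i ≠ j → a i ≤ 0) (y : ι → E) :
    ∑ i, a i * ‖y i - y j‖ ^ 2 ≤ 0 := by
  refine Finset.sum_nonpos fun i _ => ?_
  obtain rfl | hij := eq_or_ne i j
  · simp
  · exact mul_nonpos_of_nonpos_of_nonneg (ha i hij) (sq_nonneg _)

variable [InnerProductSpace ℝ E]

theorem real_inner_le_norm_sq_div_four_add_norm_sq (u v : E) :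
    ⟪u, v⟫ ≤ ‖u‖ ^ 2 / 4 + ‖v‖ ^ 2 := by
  have amgm : ‖u‖ * ‖v‖ ≤ ‖u‖ ^ 2 / 4 + ‖v‖ ^ 2 := by
    linarith [sq_nonneg (‖u‖ / 2 - ‖v‖)]
  exact (real_inner_le_norm u v).trans amgm

theorem neg_sum_mul_inner_le {a : ι → ℝ} {j : ι} (ha : ∀ i, i ≠ j → a i ≤ 0)
    (ha_sum : ∑ i, a i = 0) (y : ι → E) (e : E) :
    -∑ i, a i * ⟪y i, e⟫ ≤ -(1 / 4) * ∑ i, a i * ‖y i - y j‖ ^ 2 + a j * ‖e‖ ^ 2 := by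
  classical
  let gap i := ‖y i - y j‖ ^ 2 / 4 + ‖e‖ ^ 2 - ⟪y i - y j, e⟫
  have sum_gap_le : ∑ i, a i * gap i ≤ a j * ‖e‖ ^ 2 := by
    have gap_self : gap j = ‖e‖ ^ 2 := by simp [gap]
    have off_diag : ∑ i ∈ Finset.univ.erase j, a i * gap i ≤ 0 :=
      Finset.sum_nonpos fun i hi =>
        mul_nonpos_of_nonpos_of_nonneg (ha i (Finset.ne_of_mem_erase hi))
          (sub_nonneg.2 (real_inner_le_norm_sq_div_four_add_norm_sq _ _))
    rw [← Finset.add_sum_erase _ _ (Finset.mem_univ j), gap_self]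
    exact add_le_of_nonpos_right off_diag
  have sum_gap : ∑ i, a i * gap i =
      1 / 4 * ∑ i, a i * ‖y i - y j‖ ^ 2 - ∑ i, a i * ⟪y i, e⟫ := calc
    ∑ i, a i * gap i = ∑ i, (1 / 4 * (a i * ‖y i - y j‖ ^ 2) - a i * ⟪y i, e⟫
        + a i * (‖e‖ ^ 2 + ⟪y j, e⟫)) := by
      refine Finset.sum_congr rfl fun i _ => ?_
      simp only [gap, inner_sub_left]
      ring
    _ = 1 / 4 * ∑ i, a i * ‖y i - y j‖ ^ 2 - ∑ i, a i * ⟪y i, e⟫ := by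
      rw [Finset.sum_add_distrib, Finset.sum_sub_distrib, ← Finset.mul_sum, ← Finset.sum_mul,
        ha_sum, zero_mul, add_zero]
  linarith

theorem sum_sum_mul_norm_sub_sq {M : Matrix ι κ ℝ} (hrow : ∀ i, ∑ j, M i j = 0)
    (hcol : ∀ j, ∑ i, M i j = 0) (x : ι → E) (y : κ → E) :
    ∑ i, ∑ j, M i j * ‖x i - y j‖ ^ 2 = -2 * ∑ i, ∑ j, M i j * ⟪x i, y j⟫ := by
  have row_terms : ∑ i, ∑ j, M i j * ‖x i‖ ^ 2 = 0 := by
    simp only [← Finset.sum_mul, hrow, zero_mul, Finset.sum_const_zero]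
  have col_terms : ∑ i, ∑ j, M i j * ‖y j‖ ^ 2 = 0 := by
    rw [Finset.sum_comm]
    simp only [← Finset.sum_mul, hcol, zero_mul, Finset.sum_const_zero]
  calc
    ∑ i, ∑ j, M i j * ‖x i - y j‖ ^ 2 = ∑ i, ∑ j, (M i j * ‖x i‖ ^ 2
        + -2 * (M i j * ⟪x i, y j⟫) + M i j * ‖y j‖ ^ 2) := by
      refine Finset.sum_congr rfl fun i _ => Finset.sum_congr rfl fun j _ => ?_
      rw [norm_sub_sq_real]
      ring
    _ = -2 * ∑ i, ∑ j, M i j * ⟪x i, y j⟫ := by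
      simp only [Finset.sum_add_distrib, row_terms, col_terms, ← Finset.mul_sum, zero_add, add_zero]

theorem neg_sum_sum_mul_inner_add_le {M : Matrix ι ι ℝ} (hoff : ∀ i j, i ≠ j → M i j ≤ 0)
    (hrow : ∀ i, ∑ j, M i j = 0) (hcol : ∀ j, ∑ i, M i j = 0) (y e : ι → E) :
    -∑ i, ∑ j, M i j * ⟪y i, y j + e j⟫ ≤
      1 / 4 * ∑ i, ∑ j, M i j * ‖y i - y j‖ ^ 2 + ∑ i, M i i * ‖e i‖ ^ 2 := by
  have cross_le : -∑ i, ∑ j, M i j * ⟪y i, e j⟫ ≤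
      -(1 / 4) * ∑ i, ∑ j, M i j * ‖y i - y j‖ ^ 2 + ∑ j, M j j * ‖e j‖ ^ 2 := by
    rw [Finset.sum_comm, Finset.sum_comm (f := fun i j => M i j * ‖y i - y j‖ ^ 2),
      ← Finset.sum_neg_distrib, Finset.mul_sum, ← Finset.sum_add_distrib]
    exact Finset.sum_le_sum fun j _ => neg_sum_mul_inner_le (fun i => hoff i j) (hcol j) y (e j)
  have sum_sq_eq := sum_sum_mul_norm_sub_sq hrow hcol y y
  simp only [inner_add_right, mul_add, Finset.sum_add_distrib]
  linarith

theorem event_triggered_derivative_bound_general (L : Matrix ι ι ℝ)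
    (hrow : ∀ i, ∑ j, L i j = 0) (hoff : ∀ i j, i ≠ j → L i j ≤ 0)
    (ξ : ι → ℝ) (hξ_nonneg : ∀ i, 0 ≤ ξ i) (hξL : ∀ j, ∑ i, ξ i * L i j = 0)
    (y e : ι → E) (q : ι → ℝ) (hq : ∀ i, q i = -(1 / 2) * ∑ j, L i j * ‖y j - y i‖ ^ 2) :
    (∀ i, 0 ≤ q i) ∧
    -∑ i, ξ i * ⟪y i, ∑ j, L i j • (y j + e j)⟫ ≤
      -(1 / 2) * ∑ i, ξ i * q i + ∑ i, ξ i * L i i * ‖e i‖ ^ 2 := by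
  refine ⟨fun i => ?_, ?_⟩
  · have sum_sq_nonpos := sum_mul_norm_sub_sq_nonpos (fun j hj => hoff i j hj.symm) y
    linarith [hq i]
  · have bound := neg_sum_sum_mul_inner_add_le (M := .of fun i j => ξ i * L i j)
      (fun i j hij => mul_nonpos_of_nonneg_of_nonpos (hξ_nonneg i) (hoff i j hij))
      (fun i => by simp only [Matrix.of_apply, ← Finset.mul_sum, hrow, mul_zero]) hξL y e
    have lhs_eq : ∑ i, ξ i * ⟪y i, ∑ j, L i j • (y j + e j)⟫ =
        ∑ i, ∑ j, ξ i * L i j * ⟪y i, y j + e j⟫ := by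
      simp only [inner_sum, real_inner_smul_right, Finset.mul_sum, mul_assoc]
    have disagreement_eq : -(1 / 2) * ∑ i, ξ i * q i =
        1 / 4 * ∑ i, ∑ j, ξ i * L i j * ‖y i - y j‖ ^ 2 := by
      simp only [hq, Finset.mul_sum]
      refine Finset.sum_congr rfl fun i _ => Finset.sum_congr rfl fun j _ => ?_
      rw [norm_sub_rev]
      ring
    rw [lhs_eq, disagreement_eq]
    exact bound

end Balanced

/-- For `L` with zero row sums and nonpositive off-diagonal
entries, and nonnegative `ξ` with `ξᵀL = 0`, with
`q_i = −(1/2) Σ_j L_{ij} ‖y_j − y_i‖²`, each `q_i ≥ 0` and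
`−Σ_i ξ_i ⟨y_i, Σ_j L_{ij}(y_j + e_j)⟩ ≤ −(1/2) Σ_i ξ_i q_i + Σ_i ξ_i L_{ii} ‖e_i‖²`. -/
theorem event_triggered_derivative_bound {n p : ℕ}
    (L : Matrix (Fin n) (Fin n) ℝ)
    (hrow : ∀ i, ∑ j, L i j = 0)
    (hoff : ∀ i j, i ≠ j → L i j ≤ 0)
    (ξ : Fin n → ℝ) (hξ_nonneg : ∀ i, 0 ≤ ξ i)
    (hξL : ∀ j, ∑ i, ξ i * L i j = 0)
    (y e : Fin n → EuclideanSpace ℝ (Fin p))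
    (q : Fin n → ℝ)
    (hq : ∀ i, q i = -(1 / 2) * ∑ j, L i j * ‖y j - y i‖ ^ 2) :
    (∀ i, 0 ≤ q i) ∧
    -∑ i, ξ i * ⟪y i, ∑ j, L i j • (y j + e j)⟫ ≤
      -(1 / 2) * ∑ i, ξ i * q i + ∑ i, ξ i * L i i * ‖e i‖ ^ 2 :=
  event_triggered_derivative_bound_general L hrow hoff ξ hξ_nonneg hξL y e q hq
end

section
/- Let L̃ ∈ ℝ^{m×m} be the Laplacian matrix of a strongly connected weighted digraph on m vertices, let ξ ∈ ℝᵐ be strictly positive with ξᵀL̃ = 0, and set Ξ = diag(ξ). Let D ∈ ℝ^{m×m} be a diagonal matrix with nonnegative diagonal entries, at least one of which is strictly positive. Then Q = (1/2)(Ξ(L̃ + D) + (L̃ + D)ᵀΞ) is positive definite; equivalently, yᵀΞ(L̃ + D)y > 0 for every nonzero y ∈ ℝᵐ. -/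
open Matrix

/-!
Multiply the identity `2 yᵢ(yᵢ - yⱼ) = (yᵢ - yⱼ)² + (yᵢ² - yⱼ²)` by the weight `ξᵢ aᵢⱼ` and sum over
`i` and `j`: the left side becomes `2 yᵀΞLy`, the last terms become `ξᵀL(y²) = 0`, and what remains
is the energy `∑ ξᵢ aᵢⱼ (yᵢ - yⱼ)²`. If `yᵀΞ(L + D)y` vanishes, then `y` is constant along edges and
zero where `D` is positive, hence zero on every weakly connected component meeting the support
of `D`.
-/

namespace GroundedLaplacian

open Relation (EqvGen)

variable {n R : Type*} [Fintype n]

/-- The Laplacian of the weighted digraph with an edge from `j` to `i` of weight `A i j`: the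
row sums of `A` on the diagonal, minus `A`. Loops contribute nothing to it. -/
def laplacian [Ring R] [DecidableEq n] (A : Matrix n n R) : Matrix n n R :=
  diagonal (fun i ↦ ∑ j, A i j) - A

/-- The Dirichlet energy `∑ i, ∑ j, W i j * (y i - y j) ^ 2` of `y` with respect to the weights `W`.
Ordered pairs are summed and there is no factor `1 / 2`, so that no division is needed. -/
def dirichletEnergy [Ring R] (W : Matrix n n R) (y : n → R) : R :=
  ∑ i, ∑ j, W i j * (y i - y j) ^ 2

section Identities

theorem laplacian_mulVec_apply [Ring R] [DecidableEq n] (A : Matrix n n R) (y : n → R) (i : n) :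
    (laplacian A *ᵥ y) i = ∑ j, A i j * (y i - y j) := by
  rw [laplacian, sub_mulVec, Pi.sub_apply, mulVec_diagonal, Finset.sum_mul, mulVec, dotProduct,
    ← Finset.sum_sub_distrib]
  simp only [mul_sub]

variable [CommRing R] [DecidableEq n]

theorem two_mul_mul_laplacian_mulVec_apply (A : Matrix n n R) (y : n → R) (i : n) :
    2 * (y i * (laplacian A *ᵥ y) i) =
      ∑ j, A i j * (y i - y j) ^ 2 + (laplacian A *ᵥ (y ^ 2)) i := by
  simp only [laplacian_mulVec_apply, Pi.pow_apply, Finset.mul_sum, ← Finset.sum_add_distrib]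
  exact Finset.sum_congr rfl fun j _ ↦ by ring

theorem dotProduct_diagonal_mul_mulVec (ξ y : n → R) (M : Matrix n n R) :
    y ⬝ᵥ (diagonal ξ * M) *ᵥ y = ∑ i, ξ i * (y i * (M *ᵥ y) i) := by
  simp only [← mulVec_mulVec, dotProduct, mulVec_diagonal, mul_left_comm]

theorem two_mul_dotProduct_diagonal_mul_laplacian_mulVec (A : Matrix n n R) (ξ y : n → R) :
    2 * (y ⬝ᵥ (diagonal ξ * laplacian A) *ᵥ y) =
      dirichletEnergy (diagonal ξ * A) y + (ξ ᵥ* laplacian A) ⬝ᵥ (y ^ 2) := by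
  calc 2 * (y ⬝ᵥ (diagonal ξ * laplacian A) *ᵥ y)
      = ∑ i, ξ i * (2 * (y i * (laplacian A *ᵥ y) i)) := by
        simp only [dotProduct_diagonal_mul_mulVec, Finset.mul_sum, mul_left_comm]
    _ = dirichletEnergy (diagonal ξ * A) y + ξ ⬝ᵥ laplacian A *ᵥ (y ^ 2) := by
        simp only [two_mul_mul_laplacian_mulVec_apply, mul_add, Finset.sum_add_distrib,
          Finset.mul_sum, dirichletEnergy, diagonal_mul, dotProduct, mul_assoc]
    _ = dirichletEnergy (diagonal ξ * A) y + (ξ ᵥ* laplacian A) ⬝ᵥ (y ^ 2) := by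
        rw [dotProduct_mulVec]

theorem dotProduct_diagonal_mul_diagonal_mulVec (ξ d y : n → R) :
    y ⬝ᵥ (diagonal ξ * diagonal d) *ᵥ y = ∑ i, ξ i * d i * y i ^ 2 := by
  simp only [dotProduct_diagonal_mul_mulVec, mulVec_diagonal]
  exact Finset.sum_congr rfl fun i _ ↦ by ring

theorem two_mul_dotProduct_diagonal_mul_laplacian_add_diagonal_mulVec
    {A : Matrix n n R} {ξ : n → R} (hξA : ξ ᵥ* laplacian A = 0) (d y : n → R) :
    2 * (y ⬝ᵥ (diagonal ξ * (laplacian A + diagonal d)) *ᵥ y) =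
      dirichletEnergy (diagonal ξ * A) y + ∑ i, 2 * (ξ i * d i) * y i ^ 2 := by
  rw [mul_add, add_mulVec, dotProduct_add, mul_add,
    two_mul_dotProduct_diagonal_mul_laplacian_mulVec, hξA, zero_dotProduct, add_zero,
    dotProduct_diagonal_mul_diagonal_mulVec, Finset.mul_sum]
  simp only [mul_assoc]

end Identities

section Positivity

variable [CommRing R] [LinearOrder R] [IsStrictOrderedRing R]

theorem dirichletEnergy_nonneg {W : Matrix n n R} (hW : ∀ i j, 0 ≤ W i j) (y : n → R) :
    0 ≤ dirichletEnergy W y :=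
  Finset.sum_nonneg fun i _ ↦ Finset.sum_nonneg fun j _ ↦ mul_nonneg (hW i j) (sq_nonneg _)

theorem dirichletEnergy_pos {W : Matrix n n R} (hW : ∀ i j, 0 ≤ W i j) {y : n → R} {i j : n}
    (hij : 0 < W i j) (hy : y i ≠ y j) : 0 < dirichletEnergy W y := by
  have hterm (k l : n) : 0 ≤ W k l * (y k - y l) ^ 2 := mul_nonneg (hW k l) (sq_nonneg _)
  refine Finset.sum_pos' (fun k _ ↦ Finset.sum_nonneg fun l _ ↦ hterm k l)
    ⟨i, Finset.mem_univ i, ?_⟩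
  exact Finset.sum_pos' (fun l _ ↦ hterm i l)
    ⟨j, Finset.mem_univ j, mul_pos hij (sq_pos_of_ne_zero (sub_ne_zero.2 hy))⟩

theorem eq_of_eqvGen_of_dirichletEnergy_eq_zero {W : Matrix n n R} (hW : ∀ i j, 0 ≤ W i j)
    {y : n → R} (hy : dirichletEnergy W y = 0) {i j : n}
    (hij : EqvGen (fun u v ↦ 0 < W v u) i j) : y i = y j := by
  have hedge (u v : n) (huv : 0 < W v u) : y u = y v := by
    by_contra hne
    exact (dirichletEnergy_pos hW huv (Ne.symm hne)).ne' hy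
  exact Setoid.eqvGen_le (s := Setoid.ker y) hedge hij

theorem dirichletEnergy_add_sum_mul_sq_pos {W : Matrix n n R} {c y : n → R}
    (hW : ∀ i j, 0 ≤ W i j) (hc : ∀ i, 0 ≤ c i)
    (hground : ∀ j, ∃ i, 0 < c i ∧ EqvGen (fun u v ↦ 0 < W v u) i j) (hy : y ≠ 0) :
    0 < dirichletEnergy W y + ∑ i, c i * y i ^ 2 := by
  have hterm (i : n) : 0 ≤ c i * y i ^ 2 := mul_nonneg (hc i) (sq_nonneg _)
  obtain ⟨j, hj⟩ : ∃ j, y j ≠ 0 := Function.ne_iff.1 hy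
  obtain ⟨i, hci, hij⟩ := hground j
  by_cases hE : dirichletEnergy W y = 0
  · have hyi : y i ≠ 0 := eq_of_eqvGen_of_dirichletEnergy_eq_zero hW hE hij ▸ hj
    rw [hE, zero_add]
    exact Finset.sum_pos' (fun k _ ↦ hterm k)
      ⟨i, Finset.mem_univ i, mul_pos hci (sq_pos_of_ne_zero hyi)⟩
  · exact add_pos_of_pos_of_nonneg ((dirichletEnergy_nonneg hW y).lt_of_ne' hE)
      (Finset.sum_nonneg fun k _ ↦ hterm k)

theorem dotProduct_diagonal_mul_laplacian_add_diagonal_mulVec_pos [DecidableEq n]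
    {A : Matrix n n R} {ξ d y : n → R} (hA : ∀ i j, 0 ≤ A i j) (hξ : ∀ i, 0 < ξ i)
    (hξA : ξ ᵥ* laplacian A = 0) (hd : ∀ i, 0 ≤ d i)
    (hground : ∀ j, ∃ i, 0 < d i ∧ EqvGen (fun u v ↦ 0 < A v u) i j) (hy : y ≠ 0) :
    0 < y ⬝ᵥ (diagonal ξ * (laplacian A + diagonal d)) *ᵥ y := by
  have hW (i j : n) : 0 ≤ (diagonal ξ * A) i j := by
    simpa only [diagonal_mul] using mul_nonneg (hξ i).le (hA i j)
  have hc (i : n) : 0 ≤ 2 * (ξ i * d i) := mul_nonneg zero_le_two (mul_nonneg (hξ i).le (hd i))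
  rw [← mul_pos_iff_of_pos_left (zero_lt_two (α := R)),
    two_mul_dotProduct_diagonal_mul_laplacian_add_diagonal_mulVec hξA]
  refine dirichletEnergy_add_sum_mul_sq_pos hW hc (fun j ↦ ?_) hy
  simpa only [diagonal_mul, mul_pos_iff_of_pos_left (hξ _), zero_lt_two,
    mul_pos_iff_of_pos_left] using hground j

end Positivity

theorem posDef_half_smul_add_transpose_iff [Field R] [LinearOrder R] [IsStrictOrderedRing R]
    [StarRing R] [TrivialStar R] {M : Matrix n n R} :
    ((1 / 2 : R) • (M + Mᵀ)).PosDef ↔ ∀ y : n → R, y ≠ 0 → 0 < y ⬝ᵥ M *ᵥ y := by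
  have hform (y : n → R) : y ⬝ᵥ ((1 / 2 : R) • (M + Mᵀ)) *ᵥ y = y ⬝ᵥ M *ᵥ y := by
    rw [smul_mulVec, dotProduct_smul, add_mulVec, dotProduct_add, dotProduct_transpose_mulVec,
      smul_eq_mul, ← two_mul, one_div, inv_mul_cancel_left₀ two_ne_zero]
  have hsymm : ((1 / 2 : R) • (M + Mᵀ)).IsHermitian := by
    rw [IsHermitian, conjTranspose_eq_transpose_of_trivial, transpose_smul,
      (isSymm_add_transpose_self M).eq]
  simp only [posDef_iff_dotProduct_mulVec, hsymm, true_and, star_trivial, hform]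

end GroundedLaplacian

open GroundedLaplacian

theorem grounded_laplacian_posdef_general {n R : Type*} [Fintype n] [DecidableEq n]
    [Field R] [LinearOrder R] [IsStrictOrderedRing R] [StarRing R] [TrivialStar R]
    {A D : Matrix n n R} {ξ : n → R} (hA : ∀ i j, 0 ≤ A i j) (hξ : ∀ i, 0 < ξ i)
    (hξA : ξ ᵥ* laplacian A = 0) (hD_diag : D.IsDiag) (hD_nonneg : ∀ i, 0 ≤ D i i)
    (hground : ∀ j, ∃ i, 0 < D i i ∧ Relation.EqvGen (fun u v ↦ 0 < A v u) i j) :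
    ((1 / 2 : R) • (diagonal ξ * (laplacian A + D) +
        (diagonal ξ * (laplacian A + D))ᵀ)).PosDef ∧
    ∀ y : n → R, y ≠ 0 → 0 < y ⬝ᵥ (diagonal ξ * (laplacian A + D)) *ᵥ y := by
  have hpos (y : n → R) (hy : y ≠ 0) : 0 < y ⬝ᵥ (diagonal ξ * (laplacian A + D)) *ᵥ y := by
    rw [← hD_diag.diagonal_diag]
    exact dotProduct_diagonal_mul_laplacian_add_diagonal_mulVec_pos hA hξ hξA hD_nonneg hground hy
  exact ⟨posDef_half_smul_add_transpose_iff.2 hpos, hpos⟩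

/-- For the Laplacian `L̃` of a strongly connected weighted
digraph, a positive left null vector `ξ` with `Ξ = diag(ξ)`, and a nonnegative
diagonal matrix `D` with at least one positive diagonal entry, the matrix
`Q = (1/2)(Ξ(L̃ + D) + (L̃ + D)ᵀΞ)` is positive definite; equivalently,
`yᵀΞ(L̃ + D)y > 0` for every nonzero `y`. -/
theorem grounded_laplacian_posdef {m : ℕ}
    (A : Matrix (Fin m) (Fin m) ℝ)
    (hA_nonneg : ∀ i j, 0 ≤ A i j)
    (hA_diag : ∀ i, A i i = 0)
    (Lt : Matrix (Fin m) (Fin m) ℝ)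
    (hLt : ∀ i j, Lt i j = (if i = j then ∑ k, A i k else 0) - A i j)
    (hconn : ∀ i j : Fin m, Relation.ReflTransGen (fun u v => 0 < A v u) i j)
    (ξ : Fin m → ℝ) (hξpos : ∀ i, 0 < ξ i)
    (hξL : ∀ j, ∑ i, ξ i * Lt i j = 0)
    (D : Matrix (Fin m) (Fin m) ℝ)
    (hD_diag : ∀ i j, i ≠ j → D i j = 0)
    (hD_nonneg : ∀ i, 0 ≤ D i i)
    (hD_pos : ∃ i, 0 < D i i) :
    ((1 / 2 : ℝ) • (Matrix.diagonal ξ * (Lt + D) +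
        (Matrix.diagonal ξ * (Lt + D))ᵀ)).PosDef ∧
    ∀ y : Fin m → ℝ, y ≠ 0 →
      0 < y ⬝ᵥ (Matrix.diagonal ξ * (Lt + D)).mulVec y := by
  obtain rfl : Lt = laplacian A := Matrix.ext hLt
  exact grounded_laplacian_posdef_general hA_nonneg hξpos (funext hξL) hD_diag hD_nonneg fun j ↦
    hD_pos.imp fun p hp ↦ ⟨hp, Relation.EqvGen.reflTransGen_le_eqvGen _ _ _ (hconn p j)⟩
end

section
/- Let C > 0, c > 0, β ≥ 0, and let x : ℝ → ℝᵖ satisfy ‖x(t) − x(s)‖ ≤ C|t − s| for all t, s ≥ 0. Let (t_k)_{k≥1} be a strictly increasing sequence of nonnegative reals such that ‖x(t_{k+1}) − x(t_k)‖ ≥ c e^{−β t_{k+1}} for every k. Then t_k → ∞ as k → ∞; in particular, the sequence (t_k) cannot converge to a finite limit (no Zeno behavior). -/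
open Filter

/-!
Suppose the triggering times accumulate at a finite time `l`. By continuity the states at these
times converge, so the distance between consecutive states tends to `0`. But that distance is
bounded below by the triggering threshold, which stays above a positive constant near `l`.
-/

open Set Topology

section

variable {X : Type*} [PseudoMetricSpace X]

theorem tendsto_dist_succ_of_cauchySeq {u : ℕ → X} (hu : CauchySeq u) :
    Tendsto (fun k => dist (u (k + 1)) (u k)) atTop (𝓝 0) :=
  (cauchySeq_iff_tendsto_dist_atTop_0.1 hu).comp <|
    tendsto_atTop_mono (fun k => Prod.mk_le_mk.2 ⟨k.le_succ, le_rfl⟩) tendsto_atTop_diagonal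

variable {T : Type*} [TopologicalSpace T] {S : Set T} {x : T → X} {θ : T → ℝ} {t : ℕ → T}

theorem not_tendsto_nhds_of_le_dist_succ {l : T} (hx : ContinuousWithinAt x S l)
    (hθ : LowerSemicontinuousWithinAt θ S l) (hθl : 0 < θ l) (htS : ∀ k, t k ∈ S)
    (hgap : ∀ k, θ (t (k + 1)) ≤ dist (x (t (k + 1))) (x (t k))) :
    ¬ Tendsto t atTop (𝓝 l) := by
  intro htl
  have ht : Tendsto t atTop (𝓝[S] l) :=
    tendsto_nhdsWithin_iff.2 ⟨htl, Eventually.of_forall htS⟩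
  have hdist : Tendsto (fun k => dist (x (t (k + 1))) (x (t k))) atTop (𝓝 0) :=
    tendsto_dist_succ_of_cauchySeq (hx.tendsto.comp ht).cauchySeq
  have hthreshold : ∀ᶠ k in atTop, θ l / 2 < θ (t (k + 1)) :=
    (ht.comp (tendsto_add_atTop_nat 1)).eventually (hθ _ (half_lt_self hθl))
  have hhalf : θ l / 2 ≤ 0 :=
    ge_of_tendsto hdist (hthreshold.mono fun k hk => hk.le.trans (hgap k))
  exact (half_pos hθl).not_ge hhalf

theorem no_zeno_behavior_general [ConditionallyCompleteLinearOrder T] [OrderTopology T]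
    (hS : IsClosed S) (hx : ContinuousOn x S) (hθ : LowerSemicontinuousOn θ S)
    (hθ_pos : ∀ s ∈ S, 0 < θ s) (ht_mono : Monotone t) (htS : ∀ k, t k ∈ S)
    (hgap : ∀ k, θ (t (k + 1)) ≤ dist (x (t (k + 1))) (x (t k))) :
    Tendsto t atTop atTop := by
  refine (tendsto_atTop_of_monotone ht_mono).resolve_right ?_
  rintro ⟨l, htl⟩
  have hl : l ∈ S := hS.mem_of_tendsto htl (Eventually.of_forall htS)
  exact not_tendsto_nhds_of_le_dist_succ (hx l hl) (hθ l hl) (hθ_pos l hl) htS hgap htl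

end

/-- no Zeno behavior: If `x` is a `C`-Lipschitz curve on
`[0, ∞)` and `(t_k)` is a strictly increasing sequence of nonnegative times
with `‖x(t_{k+1}) − x(t_k)‖ ≥ c e^{−β t_{k+1}}` for all `k`, then `t_k → ∞`. -/
theorem no_zeno_behavior {p : ℕ} (C c β : ℝ) (hC : 0 < C) (hc : 0 < c)
    (hβ : 0 ≤ β)
    (x : ℝ → EuclideanSpace ℝ (Fin p))
    (hLip : ∀ t s : ℝ, 0 ≤ t → 0 ≤ s → ‖x t - x s‖ ≤ C * |t - s|)
    (tk : ℕ → ℝ) (htk_mono : StrictMono tk) (htk_nonneg : ∀ k, 0 ≤ tk k)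
    (hgap : ∀ k, c * Real.exp (-β * tk (k + 1)) ≤ ‖x (tk (k + 1)) - x (tk k)‖) :
    Tendsto tk atTop atTop := by
  have hx : ContinuousOn x (Ici 0) :=
    (LipschitzOnWith.of_dist_le' fun t ht s hs => by
      simpa only [dist_eq_norm, Real.norm_eq_abs] using hLip t s ht hs).continuousOn
  have hθ : LowerSemicontinuousOn (fun t => c * Real.exp (-β * t)) (Ici 0) :=
    ContinuousOn.lowerSemicontinuousOn (by fun_prop)
  exact no_zeno_behavior_general isClosed_Ici hx hθ (fun _ _ => by positivity)
    htk_mono.monotone htk_nonneg (by simpa only [dist_eq_norm] using hgap)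
end
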